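/- Let d and m be positive integers with 37·d < 117·m. Then there exist ten points p₁, …, p₁₀ in ℂ³ ∖ {0}, pairwise non-proportional (i.e. representing ten distinct points of the projective plane ℙ²(ℂ)), such that the only homogeneous polynomial F ∈ ℂ[x₀,x₁,x₂] of degree d all of whose partial derivatives of order at most m−1 vanish at every pᵢ is the zero polynomial. (Equivalently: the linear system 𝓛_d(m^10) of plane curves of degree d with ten general base points of multiplicity m is empty whenever d/m < 117/37.) -/

import Mathlib

open MvPolynomial

/-- `VanishToOrder F m p` : all iterated partial derivatives of `F` of total order
at most `m - 1` vanish at the point `p ∈ ℂ³`. -/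
def VanishToOrder (F : MvPolynomial (Fin 3) ℂ) (m : ℕ) (p : Fin 3 → ℂ) : Prop :=
  ∀ L : List (Fin 3), L.length < m →
    eval p (L.foldr (fun i G => pderiv i G) F) = 0

/-!
Over `𝔽₂`, take the point `(0 : 0 : 1)` and the nine conjugate points `(1 : h(α) : α)`, where `α`
runs through the roots of an irreducible polynomial `π` of degree nine. For a suitable `h` there is
an irreducible curve `n` of degree `111` with multiplicity `36` at the first point and `35` at the
nine others. Its self-intersection is `111² - 36² - 9 · 35² = 0`, so `n` is nef. A member of
`𝓛_d(m^10)` meets `n` in `111 d - (36 + 9 · 35) m = 3 (37 d - 117 m) < 0` points, hence contains `n`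
by Bézout; subtracting copies of `n` shows that the system is empty. Intersection numbers are
bounded through valuations of resultants: the degree valuation accounts for `(0 : 0 : 1)`, the
`π`-adic valuation for the nine conjugate points. The curve `n` is irreducible because its
restriction to `y = x³ + x² + 1` has an irreducible factor of degree `332 > 3 · 110`.

Lifting `π` and `h` to `ℤ`, emptiness says that an integer matrix has full column rank. It has full
column rank modulo `2`, hence over every field of characteristic zero.
-/

open scoped Polynomial WithZero

section GaussValuation

variable {R Γ₀ : Type*} [CommRing R] [LinearOrderedCommGroupWithZero Γ₀]

/-- The Gauss norm of `p` for the valuation `v` and radius `c`, with values in the value group of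
`v` (Mathlib's `Polynomial.gaussNorm` is real-valued). -/
noncomputable def gaussNorm (v : Valuation R Γ₀) (c : Γ₀) (p : R[X]) : Γ₀ :=
  p.support.sup fun j => v (p.coeff j) * c ^ j

variable (v : Valuation R Γ₀) (c : Γ₀)

lemma gaussNorm_le_iff {p : R[X]} {γ : Γ₀} :
    gaussNorm v c p ≤ γ ↔ ∀ j, v (p.coeff j) * c ^ j ≤ γ := by
  refine Finset.sup_le_iff.trans ⟨fun h j => ?_, fun h j _ => h j⟩
  by_cases hj : p.coeff j = 0
  · simp [hj]
  · exact h j (Polynomial.mem_support_iff.2 hj)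

lemma le_gaussNorm (p : R[X]) (j : ℕ) : v (p.coeff j) * c ^ j ≤ gaussNorm v c p :=
  (gaussNorm_le_iff v c).1 le_rfl j

lemma exists_min_eq_gaussNorm (p : R[X]) :
    ∃ i, v (p.coeff i) * c ^ i = gaussNorm v c p ∧
      ∀ j < i, v (p.coeff j) * c ^ j < gaussNorm v c p := by
  classical
  have attained : ∃ i, v (p.coeff i) * c ^ i = gaussNorm v c p := by
    by_contra! h
    have hlt (i : ℕ) : v (p.coeff i) * c ^ i < gaussNorm v c p :=
      (le_gaussNorm v c p i).lt_of_ne (h i)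
    exact lt_irrefl (gaussNorm v c p)
      ((Finset.sup_lt_iff (bot_le.trans_lt (hlt 0))).2 fun i _ => hlt i)
  exact ⟨Nat.find attained, Nat.find_spec attained, fun j hj =>
    (le_gaussNorm v c p j).lt_of_ne (Nat.find_min attained hj)⟩

lemma gaussNorm_mul_le (p q : R[X]) :
    gaussNorm v c (p * q) ≤ gaussNorm v c p * gaussNorm v c q := by
  refine (gaussNorm_le_iff v c).2 fun k => ?_
  rw [Polynomial.coeff_mul]
  by_cases hc : c ^ k = 0
  · simp [hc]
  rw [← le_mul_inv_iff₀ (zero_lt_iff.2 hc)]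
  refine v.map_sum_le fun x hx => ?_
  rw [le_mul_inv_iff₀ (zero_lt_iff.2 hc), ← Finset.HasAntidiagonal.mem_antidiagonal.1 hx, map_mul,
    pow_add, mul_mul_mul_comm]
  exact mul_le_mul' (le_gaussNorm v c p _) (le_gaussNorm v c q _)

/-- At the sum of the least indices where the two norms are attained, one term of the convolution
dominates all others. -/
lemma le_gaussNorm_mul (p q : R[X]) :
    gaussNorm v c p * gaussNorm v c q ≤ gaussNorm v c (p * q) := by
  obtain ⟨i, hi, hi_min⟩ := exists_min_eq_gaussNorm v c p
  obtain ⟨j, hj, hj_min⟩ := exists_min_eq_gaussNorm v c q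
  obtain hzero | hpos := (zero_le (a := gaussNorm v c p * gaussNorm v c q)).eq_or_lt
  · simp [← hzero]
  have hp : 0 < gaussNorm v c p := pos_of_mul_pos_left hpos zero_le
  have hq : 0 < gaussNorm v c q := pos_of_mul_pos_right hpos zero_le
  have split (a b : ℕ) : v (p.coeff a) * c ^ a * (v (q.coeff b) * c ^ b) =
      v (p.coeff a * q.coeff b) * c ^ (a + b) := by
    rw [map_mul, pow_add, mul_mul_mul_comm]
  have dominated : ∀ x ∈ (Finset.HasAntidiagonal.antidiagonal (i + j)).erase (i, j),
      v (p.coeff x.1 * q.coeff x.2) < v (p.coeff i * q.coeff j) := by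
    rintro ⟨a, b⟩ hx
    simp only [Finset.mem_erase, Finset.HasAntidiagonal.mem_antidiagonal, ne_eq,
      Prod.mk.injEq] at hx ⊢
    refine lt_of_mul_lt_mul_right (a := c ^ (i + j)) ?_ zero_le
    rw [← split i j, hi, hj, ← hx.2, ← split a b]
    rcases lt_or_ge a i with ha | ha
    · exact mul_lt_mul_of_lt_of_le_of_nonneg_of_pos (hi_min a ha) (le_gaussNorm v c q b) zero_le hq
    · exact mul_lt_mul_of_le_of_lt_of_nonneg_of_pos (le_gaussNorm v c p a) (hj_min b (by omega))
        zero_le hp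
  calc gaussNorm v c p * gaussNorm v c q
      = v (p.coeff i * q.coeff j) * c ^ (i + j) := by
        rw [← split, hi, hj]
    _ = v ((p * q).coeff (i + j)) * c ^ (i + j) := by
        rw [Polynomial.coeff_mul, ← Finset.add_sum_erase _ _ (a := (i, j)) (by simp),
          v.map_add_eq_of_lt_left]
        refine v.map_sum_lt (fun h => ?_) dominated
        exact hpos.ne' (by rw [← hi, ← hj, split, h, zero_mul])
    _ ≤ gaussNorm v c (p * q) := le_gaussNorm v c _ _

/-- The Gauss extension of the valuation `v` to polynomials, sending the variable to `c`. -/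
noncomputable def gaussValuation : Valuation R[X] Γ₀ where
  toFun := gaussNorm v c
  map_zero' := by simpa [gaussNorm] using bot_eq_zero
  map_one' := le_antisymm
    ((gaussNorm_le_iff v c).2 fun j => by
      rcases eq_or_ne j 0 with rfl | hj <;> simp [Polynomial.coeff_one, *])
    (by simpa using le_gaussNorm v c 1 0)
  map_mul' p q := (gaussNorm_mul_le v c p q).antisymm (le_gaussNorm_mul v c p q)
  map_add_le_max' p q := (gaussNorm_le_iff v c).2 fun j => by
    rw [Polynomial.coeff_add]
    refine (mul_le_mul_left (v.map_add _ _) _).trans ?_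
    rw [max_mul]
    exact max_le_max (le_gaussNorm v c p j) (le_gaussNorm v c q j)

lemma gaussValuation_le_iff {p : R[X]} {γ : Γ₀} :
    gaussValuation v c p ≤ γ ↔ ∀ j, v (p.coeff j) * c ^ j ≤ γ :=
  gaussNorm_le_iff v c

end GaussValuation

section ResultantBound

open WithZero Polynomial

lemma sum_range_min_succ (N k : ℕ) :
    ∑ j ∈ Finset.range N, min j (k + 1) = ∑ j ∈ Finset.range N, min j k + (N - (k + 1)) := by
  induction N with
  | zero => simp
  | succ N ih => rw [Finset.sum_range_succ, Finset.sum_range_succ, ih]; omega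

lemma sum_range_add_min_le {D A : ℕ} (hA : A ≤ D) (d a : ℕ) :
    ∑ i ∈ Finset.range (D + d), min i (A + a) + A * a ≤
      ∑ j ∈ Finset.range D, (a + min j A) + ∑ j ∈ Finset.range d, (A + min j a) := by
  induction a with
  | zero =>
    rw [Finset.sum_range_add]
    simp only [add_zero, mul_zero, zero_add, Nat.min_zero]
    gcongr
    exact min_le_right _ _
  | succ a ih =>
    simp only [← add_assoc, Finset.sum_add_distrib, Finset.sum_const, Finset.card_range,
      smul_eq_mul, sum_range_min_succ] at ih ⊢
    rw [mul_add_one, mul_one]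
    omega

variable {R : Type*} [CommRing R] (v : Valuation R ℤᵐ⁰)

lemma valuation_det_le {ι : Type*} [Fintype ι] [DecidableEq ι] (M : Matrix ι ι R) (r c : ι → ℤ)
    (h : ∀ i j, v (M i j) ≤ exp (r i + c j)) : v M.det ≤ exp (∑ i, r i + ∑ j, c j) := by
  rw [Matrix.det_apply]
  refine v.map_sum_le fun σ _ => ?_
  have hsign : v (σ.sign • ∏ i, M (σ i) i) = v (∏ i, M (σ i) i) := by
    rcases Int.units_eq_one_or σ.sign with hσ | hσ <;> simp [hσ, Valuation.map_neg]
  calc v (σ.sign • ∏ i, M (σ i) i) = ∏ i, v (M (σ i) i) := by rw [hsign, map_prod]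
    _ ≤ ∏ i, exp (r (σ i) + c i) := Finset.prod_le_prod' fun i _ => h _ _
    _ = exp (∑ i, (r (σ i) + c i)) := by
      rw [exp, ofAdd_sum]
      exact (map_prod (coeMonoidHom (α := Multiplicative ℤ)) _ _).symm
    _ = exp (∑ i, r i + ∑ j, c j) := by
      rw [Finset.sum_add_distrib, Equiv.sum_comp σ r]

lemma valuation_resultant_le_of_weights (p q : R[X]) (D d : ℕ) (r s t : ℕ → ℤ)
    (hp : ∀ i j, j ≤ i → v (p.coeff (i - j)) ≤ exp (r i + s j))
    (hq : ∀ i j, j ≤ i → v (q.coeff (i - j)) ≤ exp (r i + t j)) :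
    v (resultant p q D d) ≤ exp (∑ i ∈ Finset.range (D + d), r i +
      (∑ j ∈ Finset.range D, t j + ∑ j ∈ Finset.range d, s j)) := by
  let c : Fin (D + d) → ℤ := Fin.addCases (fun j : Fin D => t j) (fun j : Fin d => s j)
  have entry_le (i j : Fin (D + d)) : v (sylvester p q D d i j) ≤ exp (r i + c j) := by
    induction j using Fin.addCases with
    | left j =>
      simp only [sylvester, Matrix.of_apply, Fin.addCases_left, c]
      split_ifs with hij
      · exact hq _ _ hij.1
      · simp
    | right j =>
      simp only [sylvester, Matrix.of_apply, Fin.addCases_right, c]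
      split_ifs with hij
      · exact hp _ _ hij.1
      · simp
  have sum_c : ∑ j, c j = ∑ j ∈ Finset.range D, t j + ∑ j ∈ Finset.range d, s j := by
    simp [Fin.sum_univ_add, Finset.sum_range, c]
  rw [← sum_c, Finset.sum_range]
  exact valuation_det_le v (sylvester p q D d) (fun i => r i) c entry_le

/-- Local Bézout inequality: for `ε = 0` and an adic valuation it bounds the intersection
multiplicity at a point of multiplicities `A` and `a`, for `ε = 1` and the degree valuation it
bounds the number of intersection points away from a point at infinity of multiplicities `A` and
`a`. -/
lemma valuation_resultant_le (ε : ℤ) {p q : R[X]} {D d A a : ℕ} (hA : A ≤ D)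
    (hp : ∀ j, v (p.coeff j) ≤ exp (ε * (D - j) - (A - j : ℕ)))
    (hq : ∀ j, v (q.coeff j) ≤ exp (ε * (d - j) - (a - j : ℕ))) :
    v (resultant p q D d) ≤ exp (ε * (D * d) - A * a) := by
  refine (valuation_resultant_le_of_weights v p q D d (fun i => (min i (A + a) : ℕ) - ε * i)
    (fun j => ε * (D + j) - (A + min j a : ℕ)) (fun j => ε * (d + j) - (a + min j A : ℕ))
    (fun i j hij => (hp _).trans ?_) (fun i j hij => (hq _).trans ?_)).trans ?_
  · rw [exp_le_exp, Nat.cast_sub hij]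
    have : A + min j a ≤ min i (A + a) + (A - (i - j)) := by omega
    zify at this ⊢
    linarith
  · rw [exp_le_exp, Nat.cast_sub hij]
    have : a + min j A ≤ min i (A + a) + (a - (i - j)) := by omega
    zify at this ⊢
    linarith
  · rw [exp_le_exp]
    have hmin := sum_range_add_min_le hA d a
    have hlin : (∑ i ∈ Finset.range (D + d), i : ℤ) + D * d =
        ∑ j ∈ Finset.range D, (d + j : ℤ) + ∑ j ∈ Finset.range d, (D + j : ℤ) := by
      rw [Finset.sum_range_add]
      simp only [Nat.cast_add, Finset.sum_add_distrib, Finset.sum_const, Finset.card_range,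
        Int.nsmul_eq_mul]
      ring
    zify at hmin
    simp only [Finset.sum_sub_distrib, ← Finset.mul_sum]
    push_cast
    linear_combination hmin - ε * hlin

end ResultantBound

section PolynomialValuations

open WithZero Polynomial IsDedekindDomain

lemma valuation_le_exp_of_mul {S : Type*} [Ring S] (w : Valuation S ℤᵐ⁰) {n g : S} {k l : ℤ}
    (hn : ¬ w n ≤ exp k) (h : w (n * g) ≤ exp (k + 1 + l)) : w g ≤ exp l := by
  by_contra hg
  have hn0 : w n ≠ 0 := (zero_le.trans_lt (not_le.1 hn)).ne'
  have hg0 : w g ≠ 0 := (zero_le.trans_lt (not_le.1 hg)).ne'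
  rw [← exp_log hn0, exp_le_exp] at hn
  rw [← exp_log hg0, exp_le_exp] at hg
  rw [map_mul, ← exp_log hn0, ← exp_log hg0, ← exp_add, exp_le_exp] at h
  omega

variable {K : Type*} [Field K]

variable (K) in
open scoped Classical in
/-- The valuation `p ↦ exp (deg p)` on `K[X]`, i.e. the pole order at infinity. -/
noncomputable def degreeValuation : Valuation K[X] ℤᵐ⁰ :=
  (RatFunc.inftyValuation K).comap (algebraMap K[X] (RatFunc K))

lemma degreeValuation_le_exp_iff {p : K[X]} {k : ℤ} :
    degreeValuation K p ≤ exp k ↔ ∀ i : ℕ, k < i → p.coeff i = 0 := by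
  rcases eq_or_ne p 0 with rfl | hp
  · simp
  · classical
    rw [degreeValuation, Valuation.comap_apply, RatFunc.inftyValuation_apply,
      RatFunc.inftyValuation.polynomial K hp, exp_le_exp]
    refine ⟨fun h i hi => coeff_eq_zero_of_natDegree_lt (by omega), fun h => ?_⟩
    by_contra! hlt
    exact hp (leadingCoeff_eq_zero.1 (h _ hlt))

variable {π : K[X]}

/-- The `π`-adic valuation on `K[X]`, normalised so that `π` has value `exp (-1)`. -/
noncomputable def adicValuation (hπ : Irreducible π) : Valuation K[X] ℤᵐ⁰ :=
  HeightOneSpectrum.intValuation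
    { asIdeal := Ideal.span {π}
      isPrime := (Ideal.span_singleton_prime hπ.ne_zero).2 hπ.prime
      ne_bot := Ideal.span_singleton_eq_bot.not.2 hπ.ne_zero }

lemma adicValuation_le_one (hπ : Irreducible π) (p : K[X]) : adicValuation hπ p ≤ 1 :=
  HeightOneSpectrum.intValuation_le_one _ p

lemma adicValuation_le_exp_neg_iff (hπ : Irreducible π) {p : K[X]} {k : ℕ} :
    adicValuation hπ p ≤ exp (-(k : ℤ)) ↔ π ^ k ∣ p := by
  rw [adicValuation, HeightOneSpectrum.intValuation_le_pow_iff_mem, Ideal.span_singleton_pow,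
    Ideal.mem_span_singleton]

end PolynomialValuations

section BivariateValuations

open WithZero Polynomial

variable {K : Type*} [Field K] {π : K[X]} {f : K[X][X]}

lemma gaussValuation_exp_one_le_iff {k : ℤ} :
    gaussValuation (degreeValuation K) (exp 1) f ≤ exp k ↔
      ∀ i j : ℕ, k < i + j → (f.coeff j).coeff i = 0 := by
  simp only [gaussValuation_le_iff]
  rw [forall_comm]
  refine forall_congr' fun j => ?_
  rw [← exp_nsmul, ← le_mul_inv_iff₀ (by simp), ← exp_neg, ← exp_add, degreeValuation_le_exp_iff]
  refine forall_congr' fun i => ?_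
  rw [nsmul_one, ← sub_eq_add_neg, sub_lt_iff_lt_add]

lemma gaussValuation_one_le_iff {k : ℤ} :
    gaussValuation (degreeValuation K) 1 f ≤ exp k ↔
      ∀ i j : ℕ, k < i → (f.coeff j).coeff i = 0 := by
  simp only [gaussValuation_le_iff, one_pow, mul_one, degreeValuation_le_exp_iff]
  exact forall_comm

lemma gaussValuation_adicValuation_le_iff (hπ : Irreducible π) {b : ℕ} :
    gaussValuation (adicValuation hπ) (exp (-1)) f ≤ exp (-(b : ℤ)) ↔
      ∀ j, π ^ (b - j) ∣ f.coeff j := by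
  rw [gaussValuation_le_iff]
  refine forall_congr' fun j => ?_
  rw [← adicValuation_le_exp_neg_iff hπ, ← exp_nsmul, ← le_mul_inv_iff₀ (by simp), ← exp_neg,
    ← exp_add]
  rcases le_total j b with hj | hj
  · simp [Nat.cast_sub hj, add_comm, sub_eq_add_neg]
  · rw [Nat.sub_eq_zero_of_le hj]
    have h1 := adicValuation_le_one hπ (f.coeff j)
    exact iff_of_true (h1.trans (by rw [← exp_zero, exp_le_exp, nsmul_eq_mul]; omega))
      (by simpa using h1)

lemma coeff_eq_zero_of_monic_mul {n g : K[X][X]} (hn : n.Monic) {d : ℕ}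
    (h : ∀ i j, d < i + j → ((n * g).coeff j).coeff i = 0) (i j : ℕ)
    (hij : d < n.natDegree + i + j) : (g.coeff j).coeff i = 0 := by
  refine gaussValuation_exp_one_le_iff.1
    (valuation_le_exp_of_mul _ (n := n) (k := n.natDegree - 1) (l := d - n.natDegree)
      (fun hle => ?_) ?_) i j (by omega)
  · simpa [hn] using gaussValuation_exp_one_le_iff.1 hle 0 n.natDegree (by omega)
  · exact gaussValuation_exp_one_le_iff.2 fun i j hij => h i j (by omega)

lemma natDegree_eval_le_mul {v : K[X]} (hv : 0 < v.natDegree) {d : ℕ}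
    (hf : ∀ i j, d < i + j → (f.coeff j).coeff i = 0) :
    (f.eval v).natDegree ≤ v.natDegree * d := by
  rw [eval_eq_sum]
  refine natDegree_sum_le_of_forall_le _ _ fun j hj => ?_
  have hcoeff : (f.coeff j).natDegree ≤ d - j :=
    natDegree_le_iff_coeff_eq_zero.2 fun i hi => hf i j (by omega)
  have hjd : j ≤ d := by
    by_contra! hlt
    exact mem_support_iff.1 hj (Polynomial.ext fun i => hf i j (by omega))
  calc (f.coeff j * v ^ j).natDegree
      ≤ (f.coeff j).natDegree + (v ^ j).natDegree := natDegree_mul_le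
    _ ≤ v.natDegree * (d - j) + v.natDegree * j := by
      rw [natDegree_pow, mul_comm j]
      exact Nat.add_le_add_right (hcoeff.trans (Nat.le_mul_of_pos_left _ hv)) _
    _ = v.natDegree * d := by rw [← mul_add, Nat.sub_add_cancel hjd]

/-- The factor of `n` whose restriction to the curve `y = v(x)` is divisible by `P` must have full
degree. -/
lemma irreducible_of_irreducible_dvd_eval {n : K[X][X]} (hn : n.Monic)
    (htotal : ∀ i j, n.natDegree < i + j → (n.coeff j).coeff i = 0) {v P : K[X]}
    (hv : 0 < v.natDegree) (hP : Irreducible P) (hdvd : P ∣ n.eval v) (hne : n.eval v ≠ 0)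
    (hlt : v.natDegree * (n.natDegree - 1) < P.natDegree) : Irreducible n := by
  have cofactor_trivial {G H : K[X][X]} (hG : G.Monic) (hH : H.Monic) (hGH : G * H = n)
      (hPG : P ∣ G.eval v) : H.natDegree = 0 := by
    have hsum : G.natDegree + H.natDegree = n.natDegree := by rw [← hG.natDegree_mul hH, hGH]
    have hGv : G.eval v ≠ 0 := fun h0 => hne (by rw [← hGH, Polynomial.eval_mul, h0, zero_mul])
    have hGtotal : ∀ i j, G.natDegree < i + j → (G.coeff j).coeff i = 0 := fun i j hij =>
      coeff_eq_zero_of_monic_mul (n := H) hH (by rwa [mul_comm, hGH]) i j (by omega)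
    have hle := (natDegree_le_of_dvd hPG hGv).trans (natDegree_eval_le_mul hv hGtotal)
    have := lt_of_mul_lt_mul_left (hlt.trans_le hle) (Nat.zero_le _)
    omega
  refine hn.irreducible_iff_natDegree.2 ⟨fun h1 => ?_, fun G H hG hH hGH => ?_⟩
  · exact hP.not_isUnit (isUnit_of_dvd_one (by simpa [h1] using hdvd))
  · rw [← hGH, Polynomial.eval_mul] at hdvd
    rcases hP.prime.dvd_or_dvd hdvd with hPG | hPH
    · exact Or.inr (cofactor_trivial hG hH hGH hPG)
    · exact Or.inl (cofactor_trivial hH hG (by rw [mul_comm, hGH]) hPH)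

end BivariateValuations

section LinearSystem

open WithZero Polynomial

lemma resultant_natDegree_of_monic {R : Type*} [CommRing R] {n f : R[X]} {d : ℕ}
    (hn : n.Monic) (hf : f.natDegree ≤ d) : resultant n f n.natDegree d = resultant n f := by
  obtain ⟨r, rfl⟩ := Nat.exists_eq_add_of_le hf
  rw [resultant_add_right_deg _ _ _ _ _ le_rfl, coeff_natDegree, hn.leadingCoeff, one_pow, one_mul]

/-- The affine form of the linear system `𝓛_d(a, b^e)`. A form of degree `d` in `x₀, x₁, x₂` is
dehomogenised by `x₀ = 1` and viewed as a polynomial in the outer variable `y = x₁` over `K[x]`,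
`x = x₂`. It has multiplicity at least `a` at `(0 : 0 : 1)`, and multiplicity at least `b` at the
points `(1 : h(α) : α)` with `α` running through the `e` roots of `M`. -/
structure InSystem {R : Type*} [CommRing R] (M h : R[X]) (d a b : ℕ) (f : R[X][X]) : Prop where
  coeff_eq_zero_of_lt_add : ∀ i j, d < i + j → (f.coeff j).coeff i = 0
  coeff_eq_zero_of_lt : ∀ i j, d < i + a → (f.coeff j).coeff i = 0
  pow_dvd_coeff_taylor : ∀ j, M ^ (b - j) ∣ (taylor h f).coeff j

namespace InSystem

lemma natDegree_le {R : Type*} [CommRing R] {M h : R[X]} {d a b : ℕ} {f : R[X][X]}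
    (hf : InSystem M h d a b f) : f.natDegree ≤ d :=
  natDegree_le_iff_coeff_eq_zero.2 fun j hj =>
    Polynomial.ext fun i => hf.coeff_eq_zero_of_lt_add i j (by omega)

variable {K : Type*} [Field K] {π h : K[X]} {d a b A B : ℕ} {n f g : K[X][X]}

lemma degreeValuation_coeff_le (hf : InSystem π h d a b f) (j : ℕ) :
    degreeValuation K (f.coeff j) ≤ exp (1 * (d - j : ℤ) - (a - j : ℕ)) :=
  degreeValuation_le_exp_iff.2 fun i hi => by
    rcases le_total a j with haj | haj
    · exact hf.coeff_eq_zero_of_lt_add i j (by omega)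
    · exact hf.coeff_eq_zero_of_lt i j (by omega)

lemma adicValuation_coeff_taylor_le (hπ : Irreducible π) (hf : InSystem π h d a b f) (j : ℕ) :
    adicValuation hπ ((taylor h f).coeff j) ≤ exp (0 * (d - j : ℤ) - (b - j : ℕ)) := by
  rw [zero_mul, zero_sub]
  exact (adicValuation_le_exp_neg_iff hπ).2 (hf.pow_dvd_coeff_taylor j)

lemma le_of_monic (hn : n.Monic) (hsys : InSystem π h n.natDegree A B n) : A ≤ n.natDegree := by
  by_contra! hlt
  simpa [hn] using hsys.coeff_eq_zero_of_lt 0 n.natDegree (by omega)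

lemma le_of_monic_of_irreducible (hπ : Irreducible π) (hn : n.Monic)
    (hsys : InSystem π h n.natDegree A B n) : B ≤ n.natDegree := by
  by_contra! hlt
  have hdvd := hsys.pow_dvd_coeff_taylor n.natDegree
  rw [coeff_taylor_natDegree, hn.leadingCoeff] at hdvd
  exact hπ.not_isUnit (isUnit_of_dvd_one ((dvd_pow_self π (by omega)).trans hdvd))

lemma natDegree_resultant_le (hn : n.Monic) (hsys : InSystem π h n.natDegree A B n)
    (hf : InSystem π h d a b f) :
    ((resultant n f).natDegree : ℤ) ≤ n.natDegree * d - A * a ∨ resultant n f = 0 := by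
  have hle := valuation_resultant_le (degreeValuation K) 1 (hsys.le_of_monic hn)
    hsys.degreeValuation_coeff_le hf.degreeValuation_coeff_le
  rw [resultant_natDegree_of_monic hn hf.natDegree_le, one_mul, degreeValuation_le_exp_iff] at hle
  by_contra! hlt
  exact hlt.2 (leadingCoeff_eq_zero.1 (hle _ hlt.1))

lemma pow_dvd_resultant (hπ : Irreducible π) (hn : n.Monic)
    (hsys : InSystem π h n.natDegree A B n) (hf : InSystem π h d a b f) :
    π ^ (B * b) ∣ resultant n f := by
  have hn' : (taylor h n).Monic := (leadingCoeff_taylor h n).trans hn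
  have hle := valuation_resultant_le (adicValuation hπ) 0 (hsys.le_of_monic_of_irreducible hπ hn)
    (hsys.adicValuation_coeff_taylor_le hπ) (hf.adicValuation_coeff_taylor_le hπ)
  rw [zero_mul, zero_sub, ← Nat.cast_mul, adicValuation_le_exp_neg_iff, ← natDegree_taylor n h,
    resultant_natDegree_of_monic hn' ((natDegree_taylor f h).trans_le hf.natDegree_le),
    resultant_taylor] at hle
  exact hle

end InSystem

lemma dvd_of_resultant_eq_zero {R : Type*} [CommRing R] [IsDomain R] [IsIntegrallyClosed R]
    {n f : R[X]} (hn : n.Monic) (hirr : Irreducible n) (h : resultant n f = 0) : n ∣ f := by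
  let φ := algebraMap R (FractionRing R)
  have hφ : Function.Injective φ := IsFractionRing.injective _ _
  have hres : resultant (n.map φ) (f.map φ) = 0 := by
    rw [natDegree_map_eq_of_injective hφ, natDegree_map_eq_of_injective hφ, resultant_map_map, h,
      map_zero]
  have hirr' : Irreducible (n.map φ) := hn.irreducible_iff_irreducible_map_fraction_map.1 hirr
  exact (map_dvd_map φ hφ hn).1
    ((EuclideanDomain.dvd_or_coprime _ _ hirr').resolve_right (resultant_eq_zero_iff.1 hres).2)

namespace InSystem

variable {K : Type*} [Field K] {π h : K[X]} {d a b A B : ℕ} {n f g : K[X][X]}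

/-- Bézout: a curve with negative intersection number with the irreducible curve `n` contains
`n`. -/
theorem dvd_of_mul_lt (hπ : Irreducible π) (hn : n.Monic) (hirr : Irreducible n)
    (hsys : InSystem π h n.natDegree A B n) (hf : InSystem π h d a b f)
    (hlt : n.natDegree * d < A * a + π.natDegree * B * b) : n ∣ f := by
  refine dvd_of_resultant_eq_zero hn hirr ?_
  by_contra hne
  have hle := natDegree_le_of_dvd (pow_dvd_resultant hπ hn hsys hf) hne
  rw [natDegree_pow] at hle
  have hge := (natDegree_resultant_le hn hsys hf).resolve_right hne
  zify at hle hlt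
  linarith

lemma of_mul (hπ : Irreducible π) (hn : n.Monic) (hsys : InSystem π h n.natDegree A B n)
    (hA : ¬ InSystem π h n.natDegree (A + 1) B n) (hB : ¬ InSystem π h n.natDegree A (B + 1) n)
    (hd : n.natDegree ≤ d) (hmul : InSystem π h d a b (n * g)) :
    InSystem π h (d - n.natDegree) (a - A) (b - B) g := by
  have total := coeff_eq_zero_of_monic_mul hn hmul.coeff_eq_zero_of_lt_add
  refine ⟨fun i j hij => total i j (by omega), ?_, ?_⟩
  · rcases le_total a A with ha | ha
    · exact fun i j hij => total i j (by omega)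
    have hx : ∀ i j : ℕ, (d - n.natDegree - (a - A) : ℤ) < i → (g.coeff j).coeff i = 0 := by
      refine gaussValuation_one_le_iff.1
        (valuation_le_exp_of_mul _ (n := n) (k := n.natDegree - A - 1) (fun hle => hA ?_) ?_)
      · exact { hsys with coeff_eq_zero_of_lt := fun i j hij =>
          gaussValuation_one_le_iff.1 hle i j (by omega) }
      · refine gaussValuation_one_le_iff.2 fun i j hij => hmul.coeff_eq_zero_of_lt i j ?_
        omega
    exact fun i j hij => hx i j (by omega)
  · rcases le_total b B with hb | hb
    · simp [Nat.sub_eq_zero_of_le hb]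
    refine (gaussValuation_adicValuation_le_iff hπ).1
      (valuation_le_exp_of_mul _ (n := taylor h n) (k := -(B + 1 : ℕ)) (fun hle => hB ?_) ?_)
    · exact { hsys with pow_dvd_coeff_taylor := (gaussValuation_adicValuation_le_iff hπ).1 hle }
    · rw [← taylor_mul]
      convert (gaussValuation_adicValuation_le_iff hπ).2 hmul.pow_dvd_coeff_taylor using 2
      omega

/-- An irreducible curve `n` of nonnegative self-intersection is nef: subtracting copies of `n` from
a curve that meets `n` negatively keeps the intersection number negative. -/
theorem eq_zero_of_mul_lt (hπ : Irreducible π) (hn : n.Monic) (hirr : Irreducible n)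
    (hsys : InSystem π h n.natDegree A B n)
    (hA : ¬ InSystem π h n.natDegree (A + 1) B n) (hB : ¬ InSystem π h n.natDegree A (B + 1) n)
    (hself : A ^ 2 + π.natDegree * B ^ 2 ≤ n.natDegree ^ 2) (hf : InSystem π h d a b f)
    (hlt : n.natDegree * d < A * a + π.natDegree * B * b) : f = 0 := by
  induction d using Nat.strong_induction_on generalizing a b f with
  | _ d ih =>
  obtain ⟨g, rfl⟩ := dvd_of_mul_lt hπ hn hirr hsys hf hlt
  by_contra hne
  have hg : g ≠ 0 := right_ne_zero_of_mul hne
  have hd : n.natDegree ≤ d := by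
    have := hf.natDegree_le
    rw [hn.natDegree_mul' hg] at this
    omega
  have hpos : 0 < n.natDegree := hn.natDegree_pos.2 hirr.ne_one
  refine hg (ih (d - n.natDegree) (by omega) (of_mul hπ hn hsys hA hB hd hf) ?_)
  have ha : (a : ℤ) - A ≤ (a - A : ℕ) := by omega
  have hb : (b : ℤ) - B ≤ (b - B : ℕ) := by omega
  have hAa := mul_le_mul_of_nonneg_left ha (Int.natCast_nonneg A)
  have hBb := mul_le_mul_of_nonneg_left hb (Int.natCast_nonneg (π.natDegree * B))
  zify [hd] at hself hlt hAa hBb ⊢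
  linarith

end InSystem

end LinearSystem

section RabinTest

open Polynomial

/-- Rabin's test: an irreducible factor has degree dividing `deg f`, but none of its maximal proper
divisors. -/
theorem irreducible_of_dvd_X_pow_card_pow_sub_X {F : Type*} [Field F] [Finite F] {f : F[X]}
    (hpos : 0 < f.natDegree) (hdvd : f ∣ Polynomial.X ^ Nat.card F ^ f.natDegree - Polynomial.X)
    (hcop : ∀ p ∈ f.natDegree.primeFactors,
      IsCoprime f (Polynomial.X ^ Nat.card F ^ (f.natDegree / p) - Polynomial.X)) :
    Irreducible f := by
  obtain ⟨g, hg, hgf⟩ := exists_irreducible_of_natDegree_pos hpos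
  have hdeg_dvd : g.natDegree ∣ f.natDegree :=
    hg.natDegree_dvd_of_dvd_X_pow_card_pow_sub_X (hgf.trans hdvd)
  have hdeg : g.natDegree = f.natDegree := by
    by_contra hne
    obtain ⟨c, hc⟩ := hdeg_dvd
    obtain ⟨p, hp, e, rfl⟩ := Nat.exists_prime_and_dvd (n := c) (by rintro rfl; omega)
    have hp_mem : p ∈ f.natDegree.primeFactors :=
      Nat.mem_primeFactors.2 ⟨hp, ⟨g.natDegree * e, by rw [hc]; ring⟩, hpos.ne'⟩
    have hdvd' : g.natDegree ∣ f.natDegree / p :=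
      ⟨e, Nat.div_eq_of_eq_mul_right hp.pos (by rw [hc]; ring)⟩
    exact hg.not_isUnit ((hcop p hp_mem).isUnit_of_dvd' hgf
      (hg.natDegree_dvd_iff_dvd_X_pow_card_pow_sub_X.1 hdvd'))
  have hassoc := associated_of_dvd_of_natDegree_le hgf (ne_zero_of_natDegree_gt hpos) hdeg.ge
  exact hassoc.irreducible hg

end RabinTest

section Bits

open Polynomial

/-- The polynomial whose coefficients are the binary digits of `k`. -/
noncomputable def ofBits (R : Type*) [Semiring R] (k : ℕ) : R[X] :=
  ∑ i ∈ k.bitIndices.toFinset, Polynomial.X ^ i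

section Semiring

variable {R : Type*} [Semiring R]

lemma coeff_ofBits (k i : ℕ) : (ofBits R k).coeff i = if k.testBit i then 1 else 0 := by
  simp [ofBits, Polynomial.coeff_X_pow]

lemma map_ofBits {S : Type*} [Semiring S] (φ : R →+* S) (k : ℕ) :
    (ofBits R k).map φ = ofBits S k := by
  simp [ofBits, Polynomial.map_sum]

lemma ofBits_zero : ofBits R 0 = 0 := by simp [ofBits]

lemma ofBits_one : ofBits R 1 = 1 := by simp [ofBits]

lemma ofBits_two : ofBits R 2 = Polynomial.X := by
  simp [ofBits, show Nat.bitIndices 2 = [1] from Nat.bitIndices_two_pow 1]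

lemma ofBits_shiftLeft (a k : ℕ) : ofBits R (a <<< k) = ofBits R a * Polynomial.X ^ k := by
  ext i
  rw [coeff_mul_X_pow', coeff_ofBits, Nat.testBit_shiftLeft, coeff_ofBits]
  by_cases h : k ≤ i <;> simp [h]

lemma coeff_ofBits_of_lt {a k i : ℕ} (ha : a < 2 ^ k) (hi : k ≤ i) : (ofBits R a).coeff i = 0 := by
  rw [coeff_ofBits, Nat.testBit_lt_two_pow (ha.trans_le (Nat.pow_le_pow_right two_pos hi)),
    if_neg Bool.false_ne_true]

variable [Nontrivial R]

lemma natDegree_ofBits (k : ℕ) : (ofBits R k).natDegree = k.log2 := by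
  rcases eq_or_ne k 0 with rfl | hk
  · simp [ofBits_zero]
  refine natDegree_eq_of_le_of_coeff_ne_zero
    (natDegree_le_iff_coeff_eq_zero.2 fun i hi => coeff_ofBits_of_lt Nat.lt_log2_self hi) ?_
  rw [coeff_ofBits, Nat.testBit_log2 hk, if_pos rfl]
  exact one_ne_zero

lemma monic_ofBits {k : ℕ} (hk : k ≠ 0) : (ofBits R k).Monic := by
  rw [Monic, leadingCoeff, natDegree_ofBits, coeff_ofBits, Nat.testBit_log2 hk, if_pos rfl]

end Semiring

lemma ofBits_xor (a b : ℕ) : ofBits (ZMod 2) (a ^^^ b) = ofBits (ZMod 2) a + ofBits (ZMod 2) b := by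
  ext i
  rw [Polynomial.coeff_add, coeff_ofBits, coeff_ofBits, coeff_ofBits, Nat.testBit_xor]
  cases a.testBit i <;> cases b.testBit i <;> simp [CharTwo.add_self_eq_zero]

/-- `force n f = f n`; the case distinction makes the kernel evaluate `n` before substituting it
into `f`, where it may occur several times. -/
def force {α : Type*} : ℕ → (ℕ → α) → α
  | 0, f => f 0
  | n + 1, f => f (n + 1)

lemma force_eq {α : Type*} (n : ℕ) (f : ℕ → α) : force n f = f n := by
  cases n <;> rfl

/-- `Nat.testBit`, written directly in terms of operations that the kernel evaluates on literals. -/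
def kernelTestBit (a i : ℕ) : Bool := Nat.beq (Nat.land 1 (Nat.shiftRight a i)) 1

lemma kernelTestBit_eq (a i : ℕ) : kernelTestBit a i = a.testBit i := by
  rw [Bool.eq_iff_iff, kernelTestBit, Nat.beq_eq, Nat.testBit_eq_decide_div_mod_eq,
    decide_eq_true_iff, ← Nat.shiftRight_eq_div_pow, ← Nat.one_and_eq_mod_two]
  rfl

/-- The product over `𝔽₂` of the lowest `i` bits of `a` with `b`. -/
def bitMulLow (a b : ℕ) : ℕ → ℕ
  | 0 => 0
  | i + 1 => bif kernelTestBit a i then bitMulLow a b i ^^^ b <<< i else bitMulLow a b i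

/-- The product of the polynomials over `𝔽₂` encoded by `a` and `b`. -/
def bitMul (a b : ℕ) : ℕ := bitMulLow a b (a.log2 + 1)

lemma ofBits_bitMulLow (a b i : ℕ) :
    ofBits (ZMod 2) (bitMulLow a b i) = ofBits (ZMod 2) (a % 2 ^ i) * ofBits (ZMod 2) b := by
  induction i with
  | zero => simp [bitMulLow, ofBits_zero, Nat.mod_one]
  | succ i ih =>
    have hlow : ofBits (ZMod 2) (a % 2 ^ (i + 1)) =
        ofBits (ZMod 2) (a % 2 ^ i) + if a.testBit i then Polynomial.X ^ i else 0 := by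
      ext j
      rw [Polynomial.coeff_add, coeff_ofBits, coeff_ofBits, Nat.testBit_mod_two_pow,
        Nat.testBit_mod_two_pow]
      rcases lt_trichotomy j i with h | rfl | h
      · cases a.testBit i <;> simp [h, h.trans, Polynomial.coeff_X_pow, h.ne]
      · cases a.testBit j <;> simp
      · cases a.testBit i <;>
          simp [h.not_gt, Polynomial.coeff_X_pow, h.ne', Nat.not_lt.2 (Nat.succ_le_of_lt h)]
    rw [hlow, add_mul, ← ih, bitMulLow, kernelTestBit_eq]
    cases a.testBit i <;> simp [ofBits_xor, ofBits_shiftLeft, mul_comm]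

lemma ofBits_bitMul (a b : ℕ) :
    ofBits (ZMod 2) (bitMul a b) = ofBits (ZMod 2) a * ofBits (ZMod 2) b := by
  rw [bitMul, ofBits_bitMulLow, Nat.mod_eq_of_lt Nat.lt_log2_self]

/-- Powers of the polynomial over `𝔽₂` encoded by `a`. -/
def bitPow (a : ℕ) : ℕ → ℕ
  | 0 => 1
  | k + 1 => force (bitPow a k) fun r => bitMul a r

lemma ofBits_bitPow (a k : ℕ) : ofBits (ZMod 2) (bitPow a k) = ofBits (ZMod 2) a ^ k := by
  induction k with
  | zero => rw [bitPow, ofBits_one, pow_zero]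
  | succ k ih => rw [bitPow, force_eq, ofBits_bitMul, ih, pow_succ']

/-- Long division by `m` over `𝔽₂`, clearing the bits `log₂ m + i - 1, …, log₂ m` of `s`. -/
def bitModSteps (m : ℕ) : ℕ → ℕ → ℕ
  | 0, s => s
  | i + 1, s =>
    force (bif kernelTestBit s (i + m.log2) then s ^^^ m <<< i else s) (bitModSteps m i)

/-- The remainder of `s` modulo `m` as polynomials over `𝔽₂`. -/
def bitMod (s m : ℕ) : ℕ := bitModSteps m (s.log2 + 1 - m.log2) s

lemma ofBits_dvd_sub_bitModSteps (m i s : ℕ) :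
    ofBits (ZMod 2) m ∣ ofBits (ZMod 2) s - ofBits (ZMod 2) (bitModSteps m i s) := by
  induction i generalizing s with
  | zero => simp [bitModSteps]
  | succ i ih =>
    rw [bitModSteps, force_eq, kernelTestBit_eq]
    cases s.testBit (i + m.log2)
    · exact ih s
    · have h := (ih (s ^^^ m <<< i)).sub (dvd_mul_right (ofBits (ZMod 2) m) (Polynomial.X ^ i))
      rwa [ofBits_xor, ofBits_shiftLeft, sub_right_comm, add_sub_cancel_right] at h

lemma ofBits_dvd_sub_bitMod (s m : ℕ) :
    ofBits (ZMod 2) m ∣ ofBits (ZMod 2) s - ofBits (ZMod 2) (bitMod s m) :=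
  ofBits_dvd_sub_bitModSteps ..

lemma xor_lt_two_pow_of_testBit {a b k : ℕ} (ha : a < 2 ^ (k + 1)) (hb : b < 2 ^ (k + 1))
    (h : a.testBit k = b.testBit k) : a ^^^ b < 2 ^ k := by
  refine Nat.lt_pow_two_of_testBit _ fun i hi => ?_
  rcases hi.eq_or_lt with rfl | hi
  · simp [h]
  · have hle := Nat.pow_le_pow_right two_pos (Nat.succ_le_of_lt hi)
    simp [Nat.testBit_lt_two_pow (ha.trans_le hle), Nat.testBit_lt_two_pow (hb.trans_le hle)]

lemma bitModSteps_lt {m i s : ℕ} (hm : m ≠ 0) (hs : s < 2 ^ (i + m.log2)) :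
    bitModSteps m i s < 2 ^ m.log2 := by
  induction i generalizing s with
  | zero => simpa [bitModSteps] using hs
  | succ i ih =>
    rw [bitModSteps, force_eq, kernelTestBit_eq]
    rw [add_right_comm] at hs
    have hshift : m <<< i < 2 ^ (i + m.log2 + 1) := by
      rw [Nat.shiftLeft_eq, add_assoc, pow_add, mul_comm]
      exact Nat.mul_lt_mul_of_pos_left Nat.lt_log2_self (by positivity)
    cases hbit : s.testBit (i + m.log2)
    · refine ih (Nat.lt_pow_two_of_testBit _ fun j hj => ?_)
      rcases hj.eq_or_lt with rfl | hj
      · exact hbit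
      · exact Nat.testBit_lt_two_pow (hs.trans_le (Nat.pow_le_pow_right two_pos hj))
    · exact ih (xor_lt_two_pow_of_testBit hs hshift (by simp [hbit, Nat.testBit_log2 hm]))

lemma bitMod_lt {m : ℕ} (s : ℕ) (hm : m ≠ 0) : bitMod s m < 2 ^ m.log2 :=
  bitModSteps_lt hm (Nat.lt_log2_self.trans_le (Nat.pow_le_pow_right two_pos (by omega)))

lemma ofBits_dvd_ofBits_iff (m s : ℕ) :
    ofBits (ZMod 2) m ∣ ofBits (ZMod 2) s ↔ bitMod s m = 0 := by
  rw [dvd_iff_dvd_of_dvd_sub (ofBits_dvd_sub_bitMod s m)]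
  refine ⟨fun h => ?_, fun h => by simp [h, ofBits_zero]⟩
  by_contra h0
  have hne : ofBits (ZMod 2) (bitMod s m) ≠ 0 := (monic_ofBits h0).ne_zero
  have hm : m ≠ 0 := by
    rintro rfl
    exact hne (by simpa [ofBits_zero] using h)
  have hle := natDegree_le_of_dvd h hne
  rw [natDegree_ofBits, natDegree_ofBits, Nat.le_log2 h0] at hle
  exact (bitMod_lt s hm).not_ge hle

/-- At most `k` steps of Euclid's algorithm over `𝔽₂`. -/
def bitGcd : ℕ → ℕ → ℕ → ℕ
  | 0, a, _ => a
  | k + 1, a, b => bif b == 0 then a else force (bitMod a b) (bitGcd k b)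

lemma dvd_bitGcd {g : (ZMod 2)[X]} {a b : ℕ} (k : ℕ) (ha : g ∣ ofBits (ZMod 2) a)
    (hb : g ∣ ofBits (ZMod 2) b) : g ∣ ofBits (ZMod 2) (bitGcd k a b) := by
  induction k generalizing a b with
  | zero => exact ha
  | succ k ih =>
    rw [bitGcd, force_eq]
    cases b == 0
    · exact ih hb ((dvd_iff_dvd_of_dvd_sub (hb.trans (ofBits_dvd_sub_bitMod a b))).1 ha)
    · exact ha

lemma isCoprime_ofBits {a b k : ℕ} (h : bitGcd k a b = 1) :
    IsCoprime (ofBits (ZMod 2) a) (ofBits (ZMod 2) b) := by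
  refine (isRelPrime_iff_isCoprime).1 fun g ha hb => isUnit_of_dvd_one ?_
  simpa [h, ofBits_one] using dvd_bitGcd k ha hb

/-- `X ^ 2 ^ k` modulo the polynomial `f` over `𝔽₂`. -/
def bitFrobenius (f : ℕ) : ℕ → ℕ
  | 0 => 2
  | k + 1 => force (bitFrobenius f k) fun r => force (bitMul r r) fun s => bitMod s f

lemma ofBits_dvd_X_pow_two_pow_sub (f k : ℕ) :
    ofBits (ZMod 2) f ∣ Polynomial.X ^ 2 ^ k - ofBits (ZMod 2) (bitFrobenius f k) := by
  induction k with
  | zero => simp [bitFrobenius, ofBits_two]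
  | succ k ih =>
    rw [bitFrobenius, force_eq, force_eq]
    set r := bitFrobenius f k
    have hsq : Polynomial.X ^ 2 ^ (k + 1) - ofBits (ZMod 2) (bitMul r r) =
        (Polynomial.X ^ 2 ^ k - ofBits (ZMod 2) r) *
          (Polynomial.X ^ 2 ^ k + ofBits (ZMod 2) r) := by
      rw [ofBits_bitMul, pow_succ 2 k, pow_mul]
      ring
    have h := (ih.mul_right _).trans hsq.symm.dvd
    simpa using h.add (ofBits_dvd_sub_bitMod (bitMul r r) f)

theorem irreducible_ofBits {f : ℕ} (hpos : 0 < f.log2) (hfrob : bitFrobenius f f.log2 = 2)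
    (hgcd : ∀ p ∈ f.log2.primeFactors,
      bitGcd (2 * f.log2) f (bitFrobenius f (f.log2 / p) ^^^ 2) = 1) :
    Irreducible (ofBits (ZMod 2) f) := by
  have hdeg : (ofBits (ZMod 2) f).natDegree = f.log2 := natDegree_ofBits f
  have hcard : Nat.card (ZMod 2) = 2 := Nat.card_zmod 2
  refine irreducible_of_dvd_X_pow_card_pow_sub_X (by rwa [hdeg]) ?_ ?_ <;> rw [hdeg, hcard]
  · simpa [hfrob, ofBits_two] using ofBits_dvd_X_pow_two_pow_sub f f.log2
  · intro p hp
    have hcop := isCoprime_ofBits (hgcd p hp)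
    obtain ⟨q, hq⟩ := ofBits_dvd_X_pow_two_pow_sub f (f.log2 / p)
    rw [ofBits_xor, ofBits_two, ← CharTwo.sub_eq_add, ← IsCoprime.add_mul_left_right_iff (z := q),
      ← hq] at hcop
    simpa using hcop

/-- The bivariate polynomial over `𝔽₂` whose coefficients, as polynomials in the outer variable, are
encoded by a list of natural numbers. -/
noncomputable def ofBitsList : List ℕ → (ZMod 2)[X][X]
  | [] => 0
  | c :: l => Polynomial.C (ofBits (ZMod 2) c) + Polynomial.X * ofBitsList l

lemma coeff_ofBitsList (l : List ℕ) (j : ℕ) :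
    (ofBitsList l).coeff j = ofBits (ZMod 2) (l.getD j 0) := by
  induction l generalizing j with
  | nil => simp [ofBitsList, ofBits_zero]
  | cons c l ih =>
    rw [ofBitsList, Polynomial.coeff_add]
    cases j with
    | zero => simp
    | succ j => simp [coeff_C_succ, Polynomial.coeff_X_mul, ih]

/-- The value of `ofBitsList l` at the polynomial encoded by `v`, by Horner's scheme. -/
def bitEval (v : ℕ) : List ℕ → ℕ
  | [] => 0
  | c :: l => force (bitEval v l) fun r => c ^^^ bitMul v r

lemma ofBits_bitEval (v : ℕ) (l : List ℕ) :
    ofBits (ZMod 2) (bitEval v l) = (ofBitsList l).eval (ofBits (ZMod 2) v) := by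
  induction l with
  | nil => simp [bitEval, ofBitsList, ofBits_zero]
  | cons c l ih => simp [bitEval, force_eq, ofBits_xor, ofBits_bitMul, ih, ofBitsList]

/-- The coefficients of `c + (y + h) * s`. -/
def bitMulAdd (h : ℕ) : ℕ → List ℕ → List ℕ
  | c, [] => [c]
  | c, s :: l => force s fun s => force (c ^^^ bitMul h s) fun e => e :: bitMulAdd h s l

lemma ofBitsList_bitMulAdd (h c : ℕ) (l : List ℕ) :
    ofBitsList (bitMulAdd h c l) =
      Polynomial.C (ofBits (ZMod 2) c) +
        (Polynomial.X + Polynomial.C (ofBits (ZMod 2) h)) * ofBitsList l := by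
  induction l generalizing c with
  | nil => simp [bitMulAdd, ofBitsList]
  | cons s l ih =>
    rw [bitMulAdd, force_eq, force_eq, ofBitsList, ih, ofBitsList, ofBits_xor, ofBits_bitMul,
      Polynomial.C_add, Polynomial.C_mul]
    ring

/-- The coefficients of `taylor h`, by repeated Horner steps. -/
def bitTaylor (h : ℕ) : List ℕ → List ℕ
  | [] => []
  | c :: l => bitMulAdd h c (bitTaylor h l)

lemma ofBitsList_bitTaylor (h : ℕ) (l : List ℕ) :
    ofBitsList (bitTaylor h l) = taylor (ofBits (ZMod 2) h) (ofBitsList l) := by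
  induction l with
  | nil => simp [bitTaylor, ofBitsList]
  | cons c l ih =>
    rw [bitTaylor, ofBitsList_bitMulAdd, ih, ofBitsList, map_add, taylor_C, taylor_mul, taylor_X]

end Bits

section NefCurve

open Polynomial

/-- The coefficients in `y` of a curve of degree `111` over `𝔽₂` which has multiplicity `36` at
`(0 : 0 : 1)` and `35` at the nine conjugate points `(1 : h(α) : α)`, where `π(α) = 0` for the
polynomials `π` and `h` encoded by `953` and `210`. -/
def nefCoeffs : List ℕ := [
  0xb349041df6f25cbbac5, 0xbf464a9f30089c03655, 0xaac478297361e63048d, 0x51efc299376c668d978,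
  0xbd5146723c391adaa9f, 0x42c5ae2a48897531eed, 0x5f0ee7ae9aefc692f12, 0xe5e6c07300e31398e41,
  0xd78afe45117c6eee4c2, 0xd34d538f6cc33f6bbfa, 0x9da11351841fcbd40c0, 0xfa6c0ad60ed7a127889,
  0xf118f6d6245b28c0b33, 0x64588ea0ded82e3c758, 0x24940dcd15e2eddd1f9, 0xf93db1a72852437e128,
  0x3e50e6ca9bdd6c93e97, 0x70bf342f34ed5c67c1c, 0xe23a9ec123d363974dc, 0x379d0573a64c2fcd254,
  0xc9fbd58b51ef54a348a, 0x965ae70487c44685f20, 0xc08e10d37bd49a833b0, 0xe844e23980d93fccfbd,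
  0x76d277d1502335195f9, 0x44951027624367592, 0xe8170fc5dcd6b7489de, 0xe1f1a27c4e17864a5f2,
  0x8ed9779cfde5d3b4f04, 0x78271969b11a7f1fd37, 0x26b58fcadfea2a51949, 0x732958a3bed19bc4397,
  0x450290ff98bb3a423b4, 0x7a8235cb0b2b1609fb2, 0x48ecf11d324e1e797ce, 0x63dab4b59125c59cbc7,
  0x2c01e30108adadeca3a, 0x5b74d37fe46e6a3998a, 0x1e73f4add2d5963abdd, 0x1dcbd48f1f6d6bbb82b,
  0x59c124c9453b8b26a8, 0x7bbe428e51be4fda69, 0x2d8c6998447193e7fc, 0x9579ecab56a5f36b2,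
  0xd6bb122537c13fad0, 0x7e151f69a793f1943, 0x1119cca5d4d497109, 0x1a3153e806dd5e0c3,
  0x4c44e83d26a99d13, 0x5e187e6a0b5e918c, 0x2f764fab7ab9dfe8, 0x4af5ef36b113beb,
  0x6d8de674de360ce, 0x668b5869389eed0, 0x1876e25709e8854, 0x894dcc306b059a, 0xa401a2cf907a93,
  0xac52dc6deac15, 0x2d48a3a0338801, 0x1529b8ce8e7a7f, 0x86d569636465f, 0x78471115976db,
  0x2638a96949f37, 0x15e27e7851dc4, 0x779ff4bf3dac, 0x3102b5825dde, 0x1832cd2fce75,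
  0x57ccddcd896, 0xa4b9e0518fa, 0x445c43465ec, 0x132370f2ca2, 0xa9d179b09c, 0x19a8cf7404,
  0x1c29030f18, 0x2dcef1059e, 0x1a448ac5c4, 0x6efbb6afc, 0x7aacb0e47, 0x3ce76f69, 0x11ebaf22b,
  0x4d41f6f6, 0x1d3bd4, 0x7cb2de9, 0x14e38721, 0x1659fb8, 0x710d4da, 0x28a1c57, 0x12f74d9,
  0x9d9ffb, 0x192edf, 0x325114, 0x16a16c, 0x64804, 0x51051, 0x25315, 0x6058, 0x1612, 0x6df7,
  0x1651, 0xb5f, 0x96b, 0x50d, 0x29, 0x61, 0xb3, 0x53, 0x33, 0x6, 0x0, 0x0, 0x2, 0x1]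

set_option maxRecDepth 100000

lemma irreducible_ofBits_953 : Irreducible (ofBits (ZMod 2) 953) := by
  refine irreducible_ofBits (by decide +kernel) (by decide +kernel) ?_
  have hlog : Nat.log2 953 = 3 ^ 2 := by decide +kernel
  rw [hlog, Nat.primeFactors_prime_pow two_ne_zero Nat.prime_three]
  decide +kernel

/-- The restriction of the curve to `y = x³ + x² + 1`, up to a factor `x`. -/
def nefRestriction : ℕ :=
  0x187ca2fe65265bc295539479a0b0072897f4e1baf797f8818ac96a0573dfd9bef3e54cfcc2ce4cd70e3d

lemma log2_nefRestriction : nefRestriction.log2 = 332 := by decide +kernel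

lemma irreducible_nefRestriction : Irreducible (ofBits (ZMod 2) nefRestriction) := by
  have hfactors : Nat.primeFactors 332 = {2, 83} := by
    rw [show 332 = 2 ^ 2 * 83 by norm_num, Nat.primeFactors_mul (by norm_num) (by norm_num),
      Nat.primeFactors_prime_pow two_ne_zero Nat.prime_two,
      Nat.Prime.primeFactors (by norm_num : Nat.Prime 83)]
    rfl
  refine irreducible_ofBits ?_ ?_ ?_ <;> rw [log2_nefRestriction]
  · norm_num
  · decide +kernel
  · rw [hfactors]
    decide +kernel

lemma bitEval_nefCoeffs : bitEval 13 nefCoeffs = nefRestriction <<< 1 := by decide +kernel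

/-- The curve with coefficients `nefCoeffs`. -/
noncomputable def nefCurve : (ZMod 2)[X][X] := ofBitsList nefCoeffs

lemma getD_nefCoeffs_of_le {j : ℕ} (hj : 112 ≤ j) : nefCoeffs.getD j 0 = 0 :=
  List.getD_eq_default _ _ (le_of_eq_of_le (by decide +kernel) hj)

lemma coeff_nefCurve_111 : nefCurve.coeff 111 = 1 := by
  rw [nefCurve, coeff_ofBitsList, show nefCoeffs.getD 111 0 = 1 by decide +kernel, ofBits_one]

lemma natDegree_nefCurve : nefCurve.natDegree = 111 := by
  refine natDegree_eq_of_le_of_coeff_ne_zero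
    (natDegree_le_iff_coeff_eq_zero.2 fun j hj => ?_) (by simp [coeff_nefCurve_111])
  rw [nefCurve, coeff_ofBitsList, getD_nefCoeffs_of_le hj, ofBits_zero]

lemma monic_nefCurve : nefCurve.Monic := by
  rw [Monic, leadingCoeff, natDegree_nefCurve, coeff_nefCurve_111]

lemma coeff_coeff_nefCurve {i j : ℕ} (h : 111 < i + j ∨ 75 < i) :
    (nefCurve.coeff j).coeff i = 0 := by
  have hbound : ∀ j < 112, nefCoeffs.getD j 0 < 2 ^ min (112 - j) 76 := by decide +kernel
  rw [nefCurve, coeff_ofBitsList]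
  rcases lt_or_ge j 112 with hj | hj
  · exact coeff_ofBits_of_lt (hbound j hj) (by omega)
  · rw [getD_nefCoeffs_of_le hj, ofBits_zero, Polynomial.coeff_zero]

lemma coeff_taylor_nefCurve (j : ℕ) : (taylor (ofBits (ZMod 2) 210) nefCurve).coeff j =
    ofBits (ZMod 2) ((bitTaylor 210 nefCoeffs).getD j 0) := by
  rw [nefCurve, ← ofBitsList_bitTaylor, coeff_ofBitsList]

lemma inSystem_nefCurve :
    InSystem (ofBits (ZMod 2) 953) (ofBits (ZMod 2) 210) nefCurve.natDegree 36 35 nefCurve := by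
  have hmod : ∀ j < 35, bitMod ((bitTaylor 210 nefCoeffs).getD j 0) (bitPow 953 (35 - j)) = 0 := by
    decide +kernel
  rw [natDegree_nefCurve]
  refine ⟨fun i j h => coeff_coeff_nefCurve (by omega),
    fun i j h => coeff_coeff_nefCurve (by omega), fun j => ?_⟩
  rcases lt_or_ge j 35 with hj | hj
  · rw [coeff_taylor_nefCurve, ← ofBits_bitPow]
    exact (ofBits_dvd_ofBits_iff _ _).2 (hmod j hj)
  · simp [Nat.sub_eq_zero_of_le hj]

lemma not_inSystem_nefCurve_succ_left :
    ¬ InSystem (ofBits (ZMod 2) 953) (ofBits (ZMod 2) 210) nefCurve.natDegree (36 + 1) 35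
      nefCurve := fun h => by
  have hcoeff := h.coeff_eq_zero_of_lt 75 0 (by rw [natDegree_nefCurve]; norm_num)
  rw [nefCurve, coeff_ofBitsList, coeff_ofBits,
    show (nefCoeffs.getD 0 0).testBit 75 = true by decide +kernel] at hcoeff
  exact one_ne_zero hcoeff

lemma not_inSystem_nefCurve_succ_right :
    ¬ InSystem (ofBits (ZMod 2) 953) (ofBits (ZMod 2) 210) nefCurve.natDegree 36 (35 + 1)
      nefCurve := fun h => by
  have hmod : bitMod ((bitTaylor 210 nefCoeffs).getD 0 0) (bitPow 953 36) ≠ 0 := by decide +kernel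
  have hdvd := h.pow_dvd_coeff_taylor 0
  rw [coeff_taylor_nefCurve, ← ofBits_bitPow] at hdvd
  exact hmod ((ofBits_dvd_ofBits_iff _ _).1 hdvd)

lemma irreducible_nefCurve : Irreducible nefCurve := by
  have heval : nefCurve.eval (ofBits (ZMod 2) 13) =
      ofBits (ZMod 2) nefRestriction * Polynomial.X := by
    rw [nefCurve, ← ofBits_bitEval, bitEval_nefCoeffs, ofBits_shiftLeft, pow_one]
  have hv : (ofBits (ZMod 2) 13).natDegree = 3 := (natDegree_ofBits 13).trans (by decide +kernel)
  refine irreducible_of_irreducible_dvd_eval monic_nefCurve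
    inSystem_nefCurve.coeff_eq_zero_of_lt_add (by rw [hv]; norm_num) irreducible_nefRestriction
    (heval ▸ dvd_mul_right _ _) ?_ ?_
  · rw [heval]
    exact mul_ne_zero irreducible_nefRestriction.ne_zero Polynomial.X_ne_zero
  · rw [hv, natDegree_nefCurve, natDegree_ofBits, log2_nefRestriction]
    norm_num

theorem eq_zero_of_inSystem_zmod_two {d m : ℕ} {f : (ZMod 2)[X][X]}
    (hf : InSystem (ofBits (ZMod 2) 953) (ofBits (ZMod 2) 210) d m m f)
    (hdm : 37 * d < 117 * m) : f = 0 := by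
  have hdeg : (ofBits (ZMod 2) 953).natDegree = 9 :=
    (natDegree_ofBits 953).trans (by decide +kernel)
  refine InSystem.eq_zero_of_mul_lt irreducible_ofBits_953 monic_nefCurve irreducible_nefCurve
    inSystem_nefCurve not_inSystem_nefCurve_succ_left not_inSystem_nefCurve_succ_right ?_ hf ?_ <;>
  rw [hdeg, natDegree_nefCurve]
  · norm_num
  · omega

end NefCurve

section Lifting

open Polynomial

lemma exists_det_submatrix_ne_zero {k ι κ : Type*} [Field k] [Fintype ι] [DecidableEq ι]
    {A : Matrix κ ι k} (hA : ∀ c, A.mulVec c = 0 → c = 0) :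
    ∃ r : ι → κ, (A.submatrix r id).det ≠ 0 := by
  have hspan : Submodule.span k (Set.range A) = ⊤ := by
    by_contra hne
    obtain ⟨φ, hφ, hle⟩ := Submodule.exists_le_ker_of_lt_top _ (lt_top_iff_ne_top.2 hne)
    refine hφ ((dotProductEquiv k ι).symm.injective ?_)
    rw [map_zero]
    refine hA _ (funext fun x => ?_)
    have hx : φ (A x) = 0 := hle (Submodule.subset_span ⟨x, rfl⟩)
    rw [← (dotProductEquiv k ι).apply_symm_apply φ] at hx
    rwa [dotProductEquiv_apply_apply, dotProduct_comm] at hx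
  obtain ⟨v, hv, -, hli⟩ := Submodule.exists_fun_fin_finrank_span_eq k (Set.range A)
  choose r hr using hv
  let e : ι ≃ Fin (Module.finrank k (Submodule.span k (Set.range A))) :=
    Fintype.equivOfCardEq <| by
      rw [Fintype.card_fin, hspan, finrank_top, Module.finrank_fintype_fun_eq_card]
  have hrow : (A.submatrix (r ∘ e) id).row = v ∘ e := funext fun i => hr (e i)
  have hunit : IsUnit (A.submatrix (r ∘ e) id) :=
    Matrix.linearIndependent_rows_iff_isUnit.1 (hrow ▸ hli.comp _ e.injective)
  exact ⟨r ∘ e, ((Matrix.isUnit_iff_isUnit_det _).1 hunit).ne_zero⟩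

lemma mulVec_map_eq_zero_imp {R k K ι κ : Type*} [CommRing R] [Field k] [CommRing K] [IsDomain K]
    [Fintype ι] (φ : R →+* k) {ψ : R →+* K} (hψ : Function.Injective ψ) {A : Matrix κ ι R}
    (hA : ∀ c, (A.map φ).mulVec c = 0 → c = 0) {c : ι → K} (hc : (A.map ψ).mulVec c = 0) :
    c = 0 := by
  classical
  obtain ⟨r, hr⟩ := exists_det_submatrix_ne_zero hA
  have hdet : (A.submatrix r id).det ≠ 0 := fun h0 => hr <| by
    rw [Matrix.submatrix_map, ← RingHom.mapMatrix_apply, ← RingHom.map_det, h0, map_zero]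
  refine Matrix.eq_zero_of_mulVec_eq_zero (M := (A.submatrix r id).map ψ) ?_
    (funext fun i => congrFun hc (r i))
  rwa [← RingHom.mapMatrix_apply, ← RingHom.map_det, map_ne_zero_iff ψ hψ]

section Coefficients

variable {R : Type*} [CommRing R] {S : Finset (ℕ × ℕ)}

/-- The bivariate polynomial with coefficient `c (i, j)` at `x ^ i * y ^ j` for `(i, j) ∈ S`. -/
noncomputable def ofCoeffs (c : S → R) : R[X][X] :=
  ∑ p : S, c p • monomial p.1.2 (Polynomial.X ^ p.1.1)

lemma coeff_coeff_ofCoeffs (c : S → R) (i j : ℕ) :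
    ((ofCoeffs c).coeff j).coeff i = if h : (i, j) ∈ S then c ⟨(i, j), h⟩ else 0 := by
  have hterm (p : S) : ((c p • monomial p.1.2 (Polynomial.X ^ p.1.1 : R[X])).coeff j).coeff i =
      if p.1 = (i, j) then c p else 0 := by
    rw [Polynomial.coeff_smul, Polynomial.coeff_smul, Polynomial.coeff_monomial]
    split_ifs <;> simp_all [Polynomial.coeff_X_pow, Prod.ext_iff, eq_comm]
  rw [ofCoeffs, finsetSum_coeff, finsetSum_coeff]
  simp_rw [hterm]
  split_ifs with h
  · rw [Finset.sum_eq_single ⟨(i, j), h⟩ (fun p _ hp => if_neg fun hpij => hp (Subtype.ext hpij))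
      (fun hmem => absurd (Finset.mem_univ _) hmem), if_pos rfl]
  · exact Finset.sum_eq_zero fun p _ => if_neg fun (hpij : p.1 = (i, j)) => h (hpij ▸ p.2)

lemma ofCoeffs_coeff {f : R[X][X]} (hf : ∀ i j, (i, j) ∉ S → (f.coeff j).coeff i = 0) :
    ofCoeffs (fun p : S => (f.coeff p.1.2).coeff p.1.1) = f := by
  ext j i
  rw [coeff_coeff_ofCoeffs]
  split_ifs with h
  · rfl
  · exact (hf i j h).symm

lemma ofCoeffs_eq_zero_iff {c : S → R} : ofCoeffs c = 0 ↔ c = 0 := by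
  refine ⟨fun h => funext fun p => ?_, fun h => by simp [h, ofCoeffs]⟩
  simpa [h] using (coeff_coeff_ofCoeffs c p.1.1 p.1.2).symm

/-- The matrix of the linear conditions on the coefficients of `f` that express
`M ^ (b - j) ∣ (taylor h f).coeff j` for all `j`. -/
noncomputable def taylorRemMatrix (M h : R[X]) (b : ℕ) (S : Finset (ℕ × ℕ)) :
    Matrix (ℕ × ℕ) S R :=
  fun k p => ((taylor h (monomial p.1.2 (Polynomial.X ^ p.1.1))).coeff k.1 %ₘ
    M ^ (b - k.1)).coeff k.2

lemma taylorRemMatrix_mulVec (M h : R[X]) (b : ℕ) (c : S → R) (k : ℕ × ℕ) :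
    (taylorRemMatrix M h b S).mulVec c k =
      ((taylor h (ofCoeffs c)).coeff k.1 %ₘ M ^ (b - k.1)).coeff k.2 := by
  have hrem : (taylor h (ofCoeffs c)).coeff k.1 %ₘ M ^ (b - k.1) =
      ∑ p : S, c p • ((taylor h (monomial p.1.2 (Polynomial.X ^ p.1.1))).coeff k.1 %ₘ
        M ^ (b - k.1)) := by
    simp_rw [← modByMonicHom_apply, ← map_smul, ← map_sum]
    congr 1
    rw [ofCoeffs, map_sum, finsetSum_coeff]
    refine Finset.sum_congr rfl fun p _ => ?_
    rw [← Polynomial.coeff_smul, ← algebraMap_smul R[X] (c p) (Polynomial.monomial _ _), map_smul,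
      algebraMap_smul]
  rw [hrem, finsetSum_coeff]
  exact Finset.sum_congr rfl fun p _ => by
    rw [Polynomial.coeff_smul, smul_eq_mul, mul_comm]; rfl

lemma taylorRemMatrix_map {K : Type*} [CommRing K] (ψ : R →+* K) {M : R[X]} (hM : M.Monic)
    (h : R[X]) (b : ℕ) (S : Finset (ℕ × ℕ)) :
    (taylorRemMatrix M h b S).map ψ = taylorRemMatrix (M.map ψ) (h.map ψ) b S := by
  ext k p
  have hmono : (monomial p.1.2 (Polynomial.X ^ p.1.1 : K[X])) =
      (monomial p.1.2 (Polynomial.X ^ p.1.1 : R[X])).map (mapRingHom ψ) := by simp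
  rw [Matrix.map_apply, taylorRemMatrix, taylorRemMatrix, hmono, ← coe_mapRingHom, ← map_taylor,
    Polynomial.coeff_map, coe_mapRingHom, ← Polynomial.map_pow, ← map_modByMonic _ (hM.pow _),
    Polynomial.coeff_map]

lemma taylorRemMatrix_mulVec_eq_zero_iff {M : R[X]} (hM : M.Monic) (h : R[X]) (b : ℕ)
    (c : S → R) : (taylorRemMatrix M h b S).mulVec c = 0 ↔
      ∀ j, M ^ (b - j) ∣ (taylor h (ofCoeffs c)).coeff j := by
  simp_rw [← modByMonic_eq_zero_iff_dvd (hM.pow _), Polynomial.ext_iff, funext_iff, Prod.forall,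
    taylorRemMatrix_mulVec, Pi.zero_apply, Polynomial.coeff_zero]

end Coefficients

/-- The exponents of the monomials `x ^ i * y ^ j` that may occur in a member of `𝓛_d(a)`. -/
def systemExponents (d a : ℕ) : Finset (ℕ × ℕ) :=
  {p ∈ Finset.range (d + 1) ×ˢ Finset.range (d + 1) | p.1 + p.2 ≤ d ∧ p.1 + a ≤ d}

lemma mem_systemExponents {d a i j : ℕ} :
    (i, j) ∈ systemExponents d a ↔ i + j ≤ d ∧ i + a ≤ d := by
  simp only [systemExponents, Finset.mem_filter, Finset.mem_product, Finset.mem_range]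
  omega

namespace InSystem

variable {R : Type*} [CommRing R] {d a b : ℕ}

lemma coeff_eq_zero_of_notMem {M h : R[X]} {f : R[X][X]} (hf : InSystem M h d a b f) (i j : ℕ)
    (hij : (i, j) ∉ systemExponents d a) : (f.coeff j).coeff i = 0 := by
  rw [mem_systemExponents, not_and_or, not_le, not_le] at hij
  exact hij.elim (hf.coeff_eq_zero_of_lt_add i j) (hf.coeff_eq_zero_of_lt i j)

lemma ofCoeffs_iff {M : R[X]} (hM : M.Monic) (h : R[X]) (c : systemExponents d a → R) :
    InSystem M h d a b (ofCoeffs c) ↔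
      (taylorRemMatrix M h b (systemExponents d a)).mulVec c = 0 := by
  rw [taylorRemMatrix_mulVec_eq_zero_iff hM]
  refine ⟨fun hf => hf.pow_dvd_coeff_taylor, fun hdvd => ⟨?_, ?_, hdvd⟩⟩ <;>
  · intro i j hij
    rw [coeff_coeff_ofCoeffs, dif_neg]
    rw [mem_systemExponents]
    omega

/-- The system is cut out by linear equations over `R`, so it is empty over `K` if it is empty over
some residue field `k`. -/
theorem eq_zero_of_map {k K : Type*} [Field k] [CommRing K] [IsDomain K] (φ : R →+* k)
    {ψ : R →+* K} (hψ : Function.Injective ψ) {M h : R[X]} (hM : M.Monic)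
    (hempty : ∀ f, InSystem (M.map φ) (h.map φ) d a b f → f = 0) {f : K[X][X]}
    (hf : InSystem (M.map ψ) (h.map ψ) d a b f) : f = 0 := by
  have hfc := ofCoeffs_coeff hf.coeff_eq_zero_of_notMem
  rw [← hfc] at hf ⊢
  refine ofCoeffs_eq_zero_iff.2 (mulVec_map_eq_zero_imp φ hψ
    (A := taylorRemMatrix M h b (systemExponents d a)) (fun c hc => ?_) ?_)
  · rw [taylorRemMatrix_map φ hM, ← ofCoeffs_iff (hM.map φ)] at hc
    exact ofCoeffs_eq_zero_iff.1 (hempty _ hc)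
  · rwa [taylorRemMatrix_map ψ hM, ← ofCoeffs_iff (hM.map ψ)]

end InSystem

end Lifting

section Multiplicity

variable {σ R : Type*} [CommRing R]

/-- The hypersurface `F = 0` has multiplicity at least `m` at `p`: all iterated partial derivatives
of `F` of order less than `m` vanish at `p`. -/
def HasMultiplicityAtLeast (F : MvPolynomial σ R) (m : ℕ) (p : σ → R) : Prop :=
  ∀ L : List σ, L.length < m → eval p (L.foldr (fun i G => pderiv i G) F) = 0

/-- The Taylor expansion of a polynomial at `p`, as a polynomial in the displacements from `p`. -/
noncomputable def taylorAt (p : σ → R) : MvPolynomial σ R →ₐ[R] MvPolynomial σ R :=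
  aeval fun i => C (p i) + X i

lemma pderiv_taylorAt (p : σ → R) (i : σ) (F : MvPolynomial σ R) :
    pderiv i (taylorAt p F) = taylorAt p (pderiv i F) := by
  classical
  induction F using MvPolynomial.induction_on with
  | C a => simp [taylorAt, algebraMap_eq]
  | add f g hf hg => simp only [map_add, hf, hg]
  | mul_X f k hf =>
    have hX : pderiv i (taylorAt p (X k)) = taylorAt p (pderiv i (X k)) := by
      by_cases hki : k = i
      · subst hki; simp [taylorAt]
      · simp [taylorAt, pderiv_X_of_ne hki]
    simp only [map_mul, Derivation.leibniz, smul_eq_mul, map_add, hf, hX]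

lemma constantCoeff_taylorAt (p : σ → R) (F : MvPolynomial σ R) :
    constantCoeff (taylorAt p F) = eval p F := by
  suffices constantCoeff.comp (taylorAt p).toRingHom = eval p from DFunLike.congr_fun this F
  ext <;> simp [taylorAt, algebraMap_eq]

lemma aeval_taylorAt {S : Type*} [CommRing S] [Algebra R S] (p : σ → R) (u : σ → S)
    (F : MvPolynomial σ R) :
    aeval u (taylorAt p F) = aeval (fun i => algebraMap R S (p i) + u i) F := by
  suffices (aeval u).comp (taylorAt p) = aeval fun i => algebraMap R S (p i) + u i from
    DFunLike.congr_fun this F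
  ext i
  simp [taylorAt]

lemma degree_eq_of_mem_support {F : MvPolynomial σ R} {d : ℕ} (hF : F.IsHomogeneous d)
    {s : σ →₀ ℕ} (hs : s ∈ F.support) : s.degree = d :=
  (hF.degree_eq_sum_deg_support hs).symm

lemma eval_single_of_isHomogeneous [DecidableEq σ] {F : MvPolynomial σ R} {d : ℕ}
    (hF : F.IsHomogeneous d) (i : σ) :
    eval (Pi.single i 1) F = coeff (Finsupp.single i d) F := by
  rw [eval_eq]
  refine (Finset.sum_eq_single (Finsupp.single i d) (fun s hs hne => ?_) fun hs => ?_).trans ?_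
  · obtain ⟨k, hk, hki⟩ : ∃ k ∈ s.support, k ≠ i := by
      by_contra! hsub
      obtain ⟨e, rfl⟩ := Finsupp.support_subset_singleton'.1 fun k hk =>
        Finset.mem_singleton.2 (hsub k hk)
      have hdeg := degree_eq_of_mem_support hF hs
      rw [Finsupp.degree_single] at hdeg
      exact hne (hdeg ▸ rfl)
    rw [Finset.prod_eq_zero hk, mul_zero]
    rw [Pi.single_eq_of_ne hki, zero_pow (Finsupp.mem_support_iff.1 hk)]
  · rw [notMem_support_iff.1 hs, zero_mul]
  · rw [Finset.prod_eq_one, mul_one]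
    intro k hk
    rw [Finset.mem_singleton.1 (Finsupp.support_single_subset hk), Pi.single_eq_same, one_pow]

namespace HasMultiplicityAtLeast

variable {F : MvPolynomial σ R} {m : ℕ} {p : σ → R}

lemma eval_eq_zero (hF : HasMultiplicityAtLeast F (m + 1) p) : eval p F = 0 :=
  hF [] m.succ_pos

lemma pderiv (hF : HasMultiplicityAtLeast F (m + 1) p) (i : σ) :
    HasMultiplicityAtLeast (MvPolynomial.pderiv i F) m p := fun L hL => by
  simpa using hF (L ++ [i]) (by simpa using hL)

variable [IsDomain R] [CharZero R]

lemma coeff_taylorAt_eq_zero (hF : HasMultiplicityAtLeast F m p) {s : σ →₀ ℕ}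
    (hs : s.degree < m) : coeff s (taylorAt p F) = 0 := by
  induction m generalizing F s with
  | zero => exact absurd hs s.degree.not_lt_zero
  | succ m ih =>
    rcases eq_or_ne s 0 with rfl | hs0
    · rw [← constantCoeff_eq, constantCoeff_taylorAt, hF.eval_eq_zero]
    · obtain ⟨i, hi⟩ := Finsupp.ne_iff.1 hs0
      obtain ⟨t, rfl⟩ := exists_add_of_le (Finsupp.single_le_iff.2 (Nat.one_le_iff_ne_zero.2 hi))
      rw [map_add, Finsupp.degree_single] at hs
      have ht := ih (hF.pderiv i) (s := t) (by omega)
      rw [← pderiv_taylorAt, coeff_pderiv, add_comm t] at ht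
      exact (mul_eq_zero.1 ht).resolve_right (Nat.cast_add_one_ne_zero _)

lemma aeval_mem_pow {S : Type*} [CommRing S] [Algebra R S] (hF : HasMultiplicityAtLeast F m p)
    {I : Ideal S} {u : σ → S} (hu : ∀ i, u i ∈ I) :
    aeval (fun i => algebraMap R S (p i) + u i) F ∈ I ^ m := by
  have hmem : taylorAt p F ∈ idealOfVars σ R ^ m :=
    (mem_pow_idealOfVars_iff' ..).2 fun s hs => hF.coeff_taylorAt_eq_zero hs
  have hle : (idealOfVars σ R).map (aeval u : MvPolynomial σ R →ₐ[R] S) ≤ I := by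
    rw [idealOfVars, Ideal.map_span, Ideal.span_le]
    rintro _ ⟨_, ⟨i, rfl⟩, rfl⟩
    simpa using hu i
  rw [← aeval_taylorAt]
  exact Ideal.pow_right_mono hle m (Ideal.map_pow (aeval (R := R) u) _ m ▸
    Ideal.mem_map_of_mem _ hmem)

lemma coeff_eq_zero_of_single [DecidableEq σ] {i : σ} {d : ℕ} (hhom : F.IsHomogeneous d)
    (hF : HasMultiplicityAtLeast F m (Pi.single i 1)) {s : σ →₀ ℕ}
    (hs : s.degree < s i + m) : coeff s F = 0 := by
  induction m generalizing F d s with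
  | zero => exact absurd (Finsupp.le_degree i s) (not_le_of_gt hs)
  | succ m ih =>
    by_cases hk : ∃ k ≠ i, s k ≠ 0
    · obtain ⟨k, hki, hk⟩ := hk
      obtain ⟨t, rfl⟩ := exists_add_of_le (Finsupp.single_le_iff.2 (Nat.one_le_iff_ne_zero.2 hk))
      rw [Finsupp.add_apply, Finsupp.single_eq_of_ne hki.symm, map_add,
        Finsupp.degree_single] at hs
      have ht := ih hhom.pderiv (hF.pderiv k) (s := t) (by omega)
      rw [coeff_pderiv, add_comm t] at ht
      exact (mul_eq_zero.1 ht).resolve_right (Nat.cast_add_one_ne_zero _)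
    · push Not at hk
      obtain ⟨e, rfl⟩ := Finsupp.support_subset_singleton'.1 fun k hk' =>
        Finset.mem_singleton.2 (by_contra fun hki => Finsupp.mem_support_iff.1 hk' (hk k hki))
      by_cases hed : e = d
      · rw [hed, ← eval_single_of_isHomogeneous hhom, hF.eval_eq_zero]
      · exact hhom.coeff_eq_zero (by rwa [Finsupp.degree_single])

end HasMultiplicityAtLeast

end Multiplicity

section Dehomogenization

open Polynomial

lemma pow_dvd_coeff_of_mem_span_pow {R : Type*} [CommRing R] {v : R} {m : ℕ} {g : R[X]}
    (hg : g ∈ Ideal.span {Polynomial.C v, Polynomial.X} ^ m) (j : ℕ) : v ^ (m - j) ∣ g.coeff j := by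
  induction m generalizing g j with
  | zero => simp
  | succ m ih =>
    rw [pow_succ] at hg
    induction hg using Submodule.mul_induction_on' with
    | mem_mul_mem a ha b hb =>
      obtain ⟨x, y, rfl⟩ := Ideal.mem_span_pair.1 hb
      rw [show a * (x * Polynomial.C v + y * Polynomial.X) =
        Polynomial.C v * (a * x) + a * y * Polynomial.X by ring, Polynomial.coeff_add,
        Polynomial.coeff_C_mul]
      refine dvd_add ?_ ?_
      · have hdvd : v * v ^ (m - j) ∣ v * (a * x).coeff j :=
          mul_dvd_mul_left v (ih (Ideal.mul_mem_right x _ ha) j)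
        exact (pow_dvd_pow v (by omega)).trans (pow_succ' v (m - j) ▸ hdvd)
      · cases j with
        | zero => simp
        | succ j =>
          rw [Polynomial.coeff_mul_X, Nat.succ_sub_succ]
          exact ih (Ideal.mul_mem_right y _ ha) j
    | add a _ b _ ha hb => exact Polynomial.coeff_add a b j ▸ dvd_add ha hb

variable {R : Type*} [CommRing R] {F : MvPolynomial (Fin 3) R} {d m : ℕ}

/-- The affine equation of a plane curve in the chart `x₀ = 1`, as a polynomial in the outer
variable `x₁` over the polynomials in `x₂`. -/
noncomputable def dehomogenize : MvPolynomial (Fin 3) R →ₐ[R] R[X][X] :=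
  MvPolynomial.aeval ![1, Polynomial.X, Polynomial.C Polynomial.X]

lemma coeff_coeff_dehomogenize (F : MvPolynomial (Fin 3) R) (i j : ℕ) :
    ((dehomogenize F).coeff j).coeff i =
      ∑ s ∈ F.support, if s 1 = j ∧ s 2 = i then coeff s F else 0 := by
  rw [dehomogenize, MvPolynomial.aeval_def, eval₂_eq', finsetSum_coeff, finsetSum_coeff]
  refine Finset.sum_congr rfl fun s _ => ?_
  have hterm : algebraMap R R[X][X] (coeff s F) *
      ∏ k, (![1, Polynomial.X, Polynomial.C Polynomial.X] : Fin 3 → R[X][X]) k ^ s k =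
      Polynomial.monomial (s 1) (Polynomial.monomial (s 2) (coeff s F)) := by
    simp only [Polynomial.algebraMap_apply, Polynomial.algebraMap_eq, Nat.succ_eq_add_one,
      Nat.reduceAdd, Fin.prod_univ_three, Fin.isValue, Matrix.cons_val_zero, one_pow,
      Matrix.cons_val_one, one_mul, Matrix.cons_val, ← Polynomial.C_mul_X_pow_eq_monomial, map_mul,
      map_pow]
    ring
  rw [hterm, Polynomial.coeff_monomial, ite_and]
  split_ifs <;> simp_all [Polynomial.coeff_monomial]

lemma add_eq_of_mem_support (hF : F.IsHomogeneous d) {s : Fin 3 →₀ ℕ} (hs : s ∈ F.support) :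
    s 0 + s 1 + s 2 = d := by
  rw [← Fin.sum_univ_three, ← Finsupp.degree_eq_sum, degree_eq_of_mem_support hF hs]

lemma eq_zero_of_dehomogenize_eq_zero (hF : F.IsHomogeneous d) (h : dehomogenize F = 0) :
    F = 0 := by
  by_contra hne
  obtain ⟨s, hs⟩ := support_nonempty.2 hne
  have hcoeff := coeff_coeff_dehomogenize F (s 2) (s 1)
  rw [h, Finset.sum_eq_single s] at hcoeff
  · exact mem_support_iff.1 hs (by simpa using hcoeff.symm)
  · rintro t ht hts
    refine if_neg fun ⟨h1, h2⟩ => hts (Finsupp.ext fun k => ?_)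
    have hs' := add_eq_of_mem_support hF hs
    have ht' := add_eq_of_mem_support hF ht
    fin_cases k
    exacts [show t 0 = s 0 by omega, h1, h2]
  · exact fun hs' => absurd hs hs'

lemma taylor_dehomogenize (h : R[X]) (F : MvPolynomial (Fin 3) R) :
    taylor h (dehomogenize F) =
      MvPolynomial.aeval
        ![(1 : R[X][X]), Polynomial.X + Polynomial.C h, Polynomial.C Polynomial.X] F := by
  suffices ((taylorAlgHom h).restrictScalars R).comp dehomogenize =
      MvPolynomial.aeval
        ![(1 : R[X][X]), Polynomial.X + Polynomial.C h, Polynomial.C Polynomial.X] from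
    DFunLike.congr_fun this F
  ext k : 1
  fin_cases k <;> simp [dehomogenize]

variable [IsDomain R] [CharZero R]

lemma X_sub_C_pow_dvd_coeff_taylor_dehomogenize {h : R[X]} {α : R}
    (hF : HasMultiplicityAtLeast F m ![1, h.eval α, α]) (j : ℕ) :
    (Polynomial.X - Polynomial.C α) ^ (m - j) ∣ (taylor h (dehomogenize F)).coeff j := by
  refine pow_dvd_coeff_of_mem_span_pow ?_ j
  set I := Ideal.span {Polynomial.C (Polynomial.X - Polynomial.C α), (Polynomial.X : R[X][X])}
  have hC : Polynomial.C (Polynomial.X - Polynomial.C α) ∈ I := Ideal.subset_span (by simp)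
  have hX : Polynomial.X ∈ I := Ideal.subset_span (by simp)
  have hh : Polynomial.C (h - Polynomial.C (h.eval α)) ∈ I :=
    I.mem_of_dvd (map_dvd Polynomial.C (X_sub_C_dvd_sub_C_eval (a := α) (p := h))) hC
  let u : Fin 3 → R[X][X] := ![0, Polynomial.X + Polynomial.C (h - Polynomial.C (h.eval α)),
    Polynomial.C (Polynomial.X - Polynomial.C α)]
  have hu (k : Fin 3) : u k ∈ I := by
    fin_cases k
    exacts [I.zero_mem, I.add_mem hX hh, hC]
  have hpoint : (fun k => algebraMap R R[X][X] (![1, h.eval α, α] k) + u k) =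
      ![1, Polynomial.X + Polynomial.C h, Polynomial.C Polynomial.X] := by
    funext k
    fin_cases k <;> simp [u, Polynomial.algebraMap_apply, add_left_comm]
  rw [taylor_dehomogenize, ← hpoint]
  exact hF.aeval_mem_pow hu

end Dehomogenization

section Configuration

open Polynomial

variable {K : Type*} [Field K]

/-- The point `(0 : 0 : 1)`, followed by the points of the curve `x₁ = h(x₂)`, `x₀ = 1` with
`x₂ = α i`. -/
def graphPoints (h : K[X]) {n : ℕ} (α : Fin n → K) : Fin (n + 1) → Fin 3 → K :=
  Fin.cons (Pi.single 2 1) fun i => ![1, h.eval (α i), α i]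

variable {h : K[X]} {n : ℕ} {α : Fin n → K}

lemma graphPoints_ne_zero (i : Fin (n + 1)) : graphPoints h α i ≠ 0 := by
  refine Fin.cases (fun h0 => ?_) (fun i h0 => ?_) i
  · simpa [graphPoints] using congrFun h0 2
  · simpa [graphPoints] using congrFun h0 0

lemma graphPoints_not_proportional (hα : Function.Injective α) {i j : Fin (n + 1)} (hij : i ≠ j) :
    ¬∃ c : K, graphPoints h α j = c • graphPoints h α i := by
  rintro ⟨c, hc⟩
  have hc0 := congrFun hc 0
  have hc2 := congrFun hc 2
  cases i using Fin.cases with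
  | zero =>
    cases j using Fin.cases with
    | zero => exact hij rfl
    | succ j => simp [graphPoints] at hc0
  | succ i =>
    cases j using Fin.cases with
    | zero =>
      have hc1 : c = 0 := by simpa [graphPoints] using hc0.symm
      simp [graphPoints, hc1] at hc2
    | succ j =>
      have hc1 : c = 1 := by simpa [graphPoints] using hc0.symm
      exact hij (congrArg Fin.succ (hα (by simpa [graphPoints, hc1] using hc2.symm)))

lemma inSystem_dehomogenize [CharZero K] (hα : Function.Injective α) {d m : ℕ}
    {F : MvPolynomial (Fin 3) K} (hF : F.IsHomogeneous d)
    (hmult : ∀ i, HasMultiplicityAtLeast F m (graphPoints h α i)) :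
    InSystem (∏ i, (Polynomial.X - Polynomial.C (α i))) h d m m (dehomogenize F) where
  coeff_eq_zero_of_lt_add i j hij := by
    rw [coeff_coeff_dehomogenize]
    refine Finset.sum_eq_zero fun s hs => if_neg ?_
    have := add_eq_of_mem_support hF hs
    omega
  coeff_eq_zero_of_lt i j hij := by
    rw [coeff_coeff_dehomogenize]
    refine Finset.sum_eq_zero fun s hs => if_neg fun ⟨_, hi⟩ => mem_support_iff.1 hs ?_
    exact (hmult 0).coeff_eq_zero_of_single hF
      (by rwa [degree_eq_of_mem_support hF hs, hi])
  pow_dvd_coeff_taylor j := by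
    rw [← Finset.prod_pow]
    refine Finset.prod_dvd_of_coprime
      (fun i _ k _ hik => (pairwise_coprime_X_sub_C hα hik).pow) fun i _ => ?_
    exact X_sub_C_pow_dvd_coeff_taylor_dehomogenize (hmult i.succ) j

lemma exists_injective_eq_prod_X_sub_C [IsAlgClosed K] {p : K[X]} (hp : p.Monic)
    (hsep : p.Separable) (hn : p.natDegree = n) : ∃ α : Fin n → K,
      Function.Injective α ∧ p = ∏ i, (Polynomial.X - Polynomial.C (α i)) := by
  classical
  have hsplits : p.Splits := IsAlgClosed.splits p
  have hnodup : p.roots.Nodup := nodup_roots hsep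
  have hcard : p.roots.toFinset.card = n := by
    rw [Multiset.toFinset_card_of_nodup hnodup, ← hn, hsplits.natDegree_eq_card_roots]
  let e := (Finset.equivFinOfCardEq hcard).symm
  refine ⟨fun i => e i, Subtype.val_injective.comp e.injective, ?_⟩
  calc p = (p.roots.map fun a => Polynomial.X - Polynomial.C a).prod :=
        hsplits.eq_prod_roots_of_monic hp
    _ = ∏ a ∈ p.roots.toFinset, (Polynomial.X - Polynomial.C a) := by
        rw [Finset.prod, Multiset.toFinset_val, hnodup.dedup]
    _ = ∏ i, (Polynomial.X - Polynomial.C (e i : K)) := by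
        rw [e.prod_comp fun a => Polynomial.X - Polynomial.C (a : K), Finset.prod_coe_sort _
          fun a : K => Polynomial.X - Polynomial.C a]

lemma separable_map_of_irreducible [CharZero K] {M : ℤ[X]} (hM : M.Monic) (hirr : Irreducible M) :
    (M.map (Int.castRingHom K)).Separable := by
  have hrat := (IsPrimitive.Int.irreducible_iff_irreducible_map_cast hM.isPrimitive).1 hirr
  have hsep := hrat.separable.map (f := algebraMap ℚ K)
  rwa [Polynomial.map_map, RingHom.ext_int ((algebraMap ℚ K).comp _) (Int.castRingHom K)] at hsep

end Configuration

theorem emptiness_ten_points_general (K : Type*) [Field K] [CharZero K] [IsAlgClosed K] :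
    ∃ p : Fin 10 → Fin 3 → K,
      (∀ i, p i ≠ 0) ∧
      (∀ i j, i ≠ j → ¬ ∃ c : K, p j = c • p i) ∧
      ∀ d m : ℕ, 37 * d < 117 * m → ∀ F : MvPolynomial (Fin 3) K, F.IsHomogeneous d →
        (∀ i, HasMultiplicityAtLeast F m (p i)) → F = 0 := by
  set M := ofBits ℤ 953
  set h := ofBits ℤ 210
  have hM : M.Monic := monic_ofBits (by norm_num)
  have hirr : Irreducible M := hM.irreducible_of_irreducible_map (Int.castRingHom (ZMod 2)) M <| by
    rw [map_ofBits]
    exact irreducible_ofBits_953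
  have hdeg : (M.map (Int.castRingHom K)).natDegree = 9 := by
    rw [hM.natDegree_map, natDegree_ofBits]
    decide
  obtain ⟨α, hα, hprod⟩ := exists_injective_eq_prod_X_sub_C (hM.map (Int.castRingHom K))
    (separable_map_of_irreducible hM hirr) hdeg
  refine ⟨graphPoints (h.map (Int.castRingHom K)) α, graphPoints_ne_zero,
    fun i j => graphPoints_not_proportional hα, fun d m hdm F hF hmult => ?_⟩
  have hsys := inSystem_dehomogenize hα hF hmult
  rw [← hprod] at hsys
  refine eq_zero_of_dehomogenize_eq_zero hF
    (hsys.eq_zero_of_map (Int.castRingHom (ZMod 2)) Int.cast_injective hM fun f hf => ?_)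
  rw [map_ofBits, map_ofBits] at hf
  exact eq_zero_of_inSystem_zmod_two hf hdm

/-- If `37 d < 117 m`, there are ten points of `ℂ³ \ {0}`, pairwise non-proportional
(hence ten distinct points of `ℙ²(ℂ)`), such that the only homogeneous polynomial of
degree `d` with multiplicity at least `m` at each of them is the zero polynomial:
the linear system `𝓛_d(m^10)` with ten general base points is empty. -/
theorem emptiness_ten_points (d m : ℕ) (hd : 0 < d) (hm : 0 < m)
    (h : 37 * d < 117 * m) :
    ∃ p : Fin 10 → Fin 3 → ℂ,
      (∀ i, p i ≠ 0) ∧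
      (∀ i j, i ≠ j → ¬ ∃ c : ℂ, p j = c • p i) ∧
      (∀ F : MvPolynomial (Fin 3) ℂ, F.IsHomogeneous d →
        (∀ i, VanishToOrder F m (p i)) → F = 0) := by
  obtain ⟨p, hne, hprop, hempty⟩ := emptiness_ten_points_general ℂ
  exact ⟨p, hne, hprop, hempty d m h⟩
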